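/- Let 0 < a ≤ 2. Then lim_{N→∞} #{(r₁,r₂) ∈ {0,…,N−1}² : gcd(r₁,r₂,N) = 1 and there exists (x,y) ∈ ℤ² with (x,y) ≢ (0,0) (mod N), r₁x + r₂y ≡ 0 (mod N), |x| < √(aN)/2 and |y| < √(aN)/2} / #{(r₁,r₂) ∈ {0,…,N−1}² : gcd(r₁,r₂,N) = 1} = 3a/π². -/

import Mathlib

open Filter

/-!
Write `ρ = √(aN)/2`. Two integer points killed by a form `r₁x + r₂y` with `gcd(r₁, r₂, N) = 1` have
determinant divisible by `N`, while two points of `(-ρ, ρ)²` have determinant smaller than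
`2ρ² ≤ N`. Hence all short solutions lie on one line through the origin, and `r` has either no
primitive direction `±v` with a short multiple solving the congruence or exactly one. The smallest
such multiple is the additive order `d` of `r₁v₁ + r₂v₂`, so double counting pairs `(r, v)` amounts
to counting, for each `d ∣ N`, the primitive `v` in `(-ρ/d, ρ/d)²` and the `r` for which this order
is `d`. By `SL₂(ℤ)`-invariance the second number does not depend on `v`; for `v = (1, 0)` it is
`d φ(d) φ(N/d)`.

The proportion sought is therefore exactly `a/2` times an average over `d ∣ N` of the densities of
primitive points in `(-ρ/d, ρ/d)²`. The weight of `d` is at most `1/d`, so the divisors for which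
`ρ/d` stays bounded have total weight `O(τ(N)/ρ)`, where `τ(N)` is the number of divisors of `N`.
Since `τ(N) = o(√N)`, the average tends to the limiting density `6/π²`.
-/

open Finset
open scoped Topology Nat ArithmeticFunction.Moebius

section LatticePoints

/-- The nonzero integer points of the open square `(-R, R)²`, which is the open ball of radius `R`
for the sup norm that `ℤ × ℤ` carries. -/
noncomputable def puncturedBox (R : ℝ) : Finset (ℤ × ℤ) :=
  (Ioo (-⌈R⌉) ⌈R⌉ ×ˢ Ioo (-⌈R⌉) ⌈R⌉).erase 0

/-- The primitive integer points (those with coprime coordinates) of the open square `(-R, R)²`. -/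
noncomputable def primitivePoints (R : ℝ) : Finset (ℤ × ℤ) :=
  {v ∈ puncturedBox R | Int.gcd v.1 v.2 = 1}

/-- The proportion of primitive points in the square `(-R, R)²`, relative to its area `4R²`. -/
noncomputable def primitiveDensity (R : ℝ) : ℝ :=
  #(primitivePoints R) / (4 * R ^ 2)

variable {R : ℝ} {v : ℤ × ℤ}

lemma mem_puncturedBox : v ∈ puncturedBox R ↔ v ≠ 0 ∧ ‖v‖ < R := by
  have mem_Ioo_ceil (x : ℤ) : x ∈ Ioo (-⌈R⌉) ⌈R⌉ ↔ |(x : ℝ)| < R := by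
    rw [Finset.mem_Ioo, abs_lt, Int.lt_ceil, neg_lt, Int.lt_ceil, Int.cast_neg, neg_lt]
  simp only [puncturedBox, mem_erase, mem_product, mem_Ioo_ceil, Prod.norm_def, Int.norm_eq_abs,
    sup_lt_iff]

lemma ne_zero_of_gcd_eq_one (hv : Int.gcd v.1 v.2 = 1) : v ≠ 0 := by
  rintro rfl
  simp at hv

lemma mem_primitivePoints : v ∈ primitivePoints R ↔ ‖v‖ < R ∧ Int.gcd v.1 v.2 = 1 := by
  rw [primitivePoints, mem_filter, mem_puncturedBox]
  exact ⟨fun h => ⟨h.1.2, h.2⟩, fun h => ⟨⟨ne_zero_of_gcd_eq_one h.2, h.1⟩, h.2⟩⟩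

lemma puncturedBox_eq_empty (hR : R ≤ 0) : puncturedBox R = ∅ :=
  eq_empty_of_forall_notMem fun _ hv =>
    ((mem_puncturedBox.mp hv).2.trans_le hR).not_ge (norm_nonneg _)

lemma card_puncturedBox (hR : 0 < R) :
    (#(puncturedBox R) : ℝ) = 4 * (⌈R⌉ : ℝ) * ((⌈R⌉ : ℝ) - 1) := by
  have ceil_pos : 0 < ⌈R⌉ := Int.ceil_pos.mpr hR
  have zero_mem : (0 : ℤ × ℤ) ∈ Ioo (-⌈R⌉) ⌈R⌉ ×ˢ Ioo (-⌈R⌉) ⌈R⌉ := by simp [hR]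
  have card_add_one := card_erase_add_one zero_mem
  have side_length : (((⌈R⌉ - -⌈R⌉ - 1).toNat : ℕ) : ℤ) = 2 * ⌈R⌉ - 1 := by omega
  rw [card_product, Int.card_Ioo] at card_add_one
  zify [side_length] at card_add_one
  have card_eq : (#(puncturedBox R) : ℤ) = 4 * ⌈R⌉ * (⌈R⌉ - 1) := by
    rw [puncturedBox]
    linear_combination card_add_one
  exact_mod_cast card_eq

lemma card_puncturedBox_le (R : ℝ) : (#(puncturedBox R) : ℝ) ≤ 8 * R ^ 2 := by
  rcases le_or_gt R 0 with hR | hR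
  · simp only [puncturedBox_eq_empty hR, card_empty, Nat.cast_zero]
    positivity
  obtain ⟨k, hk⟩ : ∃ k : ℕ, (k : ℤ) = ⌈R⌉ - 1 :=
    Int.eq_ofNat_of_zero_le (by have := Int.ceil_pos.mpr hR; omega) |>.imp fun _ h => h.symm
  have ceil_eq : (⌈R⌉ : ℝ) = k + 1 := by exact_mod_cast (by omega : ⌈R⌉ = k + 1)
  have k_le : (k : ℝ) ≤ R := by linarith [Int.ceil_lt_add_one R]
  have k_le_sq : (k : ℝ) ≤ (k : ℝ) ^ 2 := by exact_mod_cast Nat.le_self_pow two_ne_zero k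
  calc (#(puncturedBox R) : ℝ) = 4 * ((k : ℝ) ^ 2 + k) := by
        rw [card_puncturedBox hR, ceil_eq]
        ring
    _ ≤ 8 * (k : ℝ) ^ 2 := by linarith
    _ ≤ 8 * R ^ 2 := by gcongr

lemma tendsto_card_puncturedBox_div_sq :
    Tendsto (fun R : ℝ => (#(puncturedBox R) : ℝ) / R ^ 2) atTop (𝓝 4) := by
  have ceil_div : Tendsto (fun R : ℝ => (⌈R⌉ : ℝ) / R) atTop (𝓝 1) :=
    tendsto_nat_ceil_div_atTop.congr' (by
      filter_upwards [eventually_ge_atTop 0] with R hR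
      rw [natCast_ceil_eq_intCast_ceil hR])
  have product_limit := (ceil_div.const_mul 4).mul (ceil_div.sub tendsto_inv_atTop_zero)
  rw [show (4 : ℝ) * 1 * (1 - 0) = 4 by norm_num] at product_limit
  refine product_limit.congr' ?_
  filter_upwards [eventually_gt_atTop 0] with R hR
  rw [card_puncturedBox hR]
  field_simp

lemma card_filter_dvd_gcd_puncturedBox (R : ℝ) {g : ℕ} (hg : 0 < g) :
    #{v ∈ puncturedBox R | g ∣ Int.gcd v.1 v.2} = #(puncturedBox (R / g)) := by
  have hgℝ : (0 : ℝ) < g := by exact_mod_cast hg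
  have hgℤ : (g : ℤ) ≠ 0 := by exact_mod_cast hg.ne'
  have smul_mem (v : ℤ × ℤ) : (g : ℤ) • v ∈ puncturedBox R ↔ v ∈ puncturedBox (R / g) := by
    rw [mem_puncturedBox, mem_puncturedBox, norm_smul, Int.norm_natCast, lt_div_iff₀ hgℝ, mul_comm,
      smul_ne_zero_iff_right hgℤ]
  rw [← card_image_of_injective (puncturedBox (R / g)) (smul_right_injective (ℤ × ℤ) hgℤ)]
  congr 1
  ext v
  simp only [mem_filter, Finset.mem_image]
  constructor
  · rintro ⟨hv, hdvd⟩
    obtain ⟨⟨x, hx⟩, ⟨y, hy⟩⟩ := Int.dvd_coe_gcd_iff.mp (Int.natCast_dvd_natCast.mpr hdvd)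
    obtain rfl : (g : ℤ) • (x, y) = v := Prod.ext hx.symm hy.symm
    exact ⟨_, (smul_mem _).mp hv, rfl⟩
  · rintro ⟨w, hw, rfl⟩
    exact ⟨(smul_mem w).mpr hw, by simp [Int.gcd_mul_left]⟩

end LatticePoints

section Moebius

lemma hasSum_moebius_ite_dvd {n : ℕ} (hn : n ≠ 0) :
    HasSum (fun g : ℕ => if g ∣ n then (μ g : ℝ) else 0) (if n = 1 then 1 else 0) := by
  have sum_divisors :
      ∑ g ∈ n.divisors, (if g ∣ n then (μ g : ℝ) else 0) = if n = 1 then 1 else 0 := by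
    rw [sum_congr rfl fun g hg => if_pos (Nat.dvd_of_mem_divisors hg)]
    have h := congrArg (fun f => f n) ArithmeticFunction.moebius_mul_coe_zeta
    simp only [ArithmeticFunction.coe_mul_zeta_apply, ArithmeticFunction.one_apply] at h
    exact_mod_cast h
  rw [← sum_divisors]
  exact hasSum_sum_of_ne_finset_zero fun g hg =>
    if_neg fun hdvd => hg (Nat.mem_divisors.mpr ⟨hdvd, hn⟩)

lemma hasSum_moebius_mul_card_puncturedBox (R : ℝ) :
    HasSum (fun g : ℕ => (μ g : ℝ) * #(puncturedBox (R / g))) #(primitivePoints R) := by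
  have sum_over_points : HasSum
      (fun g : ℕ => ∑ v ∈ puncturedBox R, if g ∣ Int.gcd v.1 v.2 then (μ g : ℝ) else 0)
      (∑ v ∈ puncturedBox R, if Int.gcd v.1 v.2 = 1 then 1 else 0) :=
    hasSum_sum fun v hv => hasSum_moebius_ite_dvd fun h =>
      (mem_puncturedBox.mp hv).1 (Prod.ext_iff.mpr (Int.gcd_eq_zero_iff.mp h))
  rw [sum_boole] at sum_over_points
  refine sum_over_points.congr_fun fun g => ?_
  rcases g.eq_zero_or_pos with rfl | hg
  · simp
  · rw [← card_filter_dvd_gcd_puncturedBox R hg, ← sum_filter, sum_const, nsmul_eq_mul, mul_comm]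

lemma tsum_moebius_div_sq : ∑' g : ℕ, (μ g : ℝ) / (g : ℝ) ^ 2 = 6 / Real.pi ^ 2 := by
  have lseries_eq : LSeries (fun n => ((μ n : ℤ) : ℂ)) 2 =
      ((∑' g : ℕ, (μ g : ℝ) / (g : ℝ) ^ 2 : ℝ) : ℂ) := by
    rw [LSeries, Complex.ofReal_tsum]
    refine tsum_congr fun n => ?_
    rcases eq_or_ne n 0 with rfl | hn
    · simp
    · rw [LSeries.term_of_ne_zero hn]
      push_cast
      rw [← Nat.cast_two, Complex.cpow_natCast]
  have zeta_mul := ArithmeticFunction.LSeries_zeta_mul_Lseries_moebius (s := 2) (by norm_num)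
  rw [ArithmeticFunction.LSeries_zeta_eq_riemannZeta (by norm_num), riemannZeta_two,
    lseries_eq] at zeta_mul
  have zeta_mul_real : Real.pi ^ 2 / 6 * ∑' g : ℕ, (μ g : ℝ) / (g : ℝ) ^ 2 = 1 := by
    exact_mod_cast zeta_mul
  rw [eq_inv_of_mul_eq_one_right zeta_mul_real, inv_div]

lemma tendsto_card_puncturedBox_div_natCast (g : ℕ) :
    Tendsto (fun R : ℝ => (#(puncturedBox (R / g)) : ℝ) / R ^ 2) atTop (𝓝 (4 / (g : ℝ) ^ 2)) := by
  rcases g.eq_zero_or_pos with rfl | hg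
  · simp [puncturedBox_eq_empty]
  have hgℝ : (0 : ℝ) < g := by exact_mod_cast hg
  refine ((tendsto_card_puncturedBox_div_sq.comp
    (tendsto_id.atTop_div_const hgℝ)).div_const _).congr fun R => ?_
  simp only [Function.comp_apply, id_eq]
  field_simp

lemma tendsto_primitiveDensity : Tendsto primitiveDensity atTop (𝓝 (6 / Real.pi ^ 2)) := by
  have summable_bound : Summable fun g : ℕ => 8 * (1 / (g : ℝ) ^ 2) :=
    (Real.summable_one_div_nat_pow.mpr one_lt_two).mul_left 8
  have termwise_le : ∀ᶠ R : ℝ in atTop, ∀ g : ℕ,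
      ‖(μ g : ℝ) * (#(puncturedBox (R / g)) / R ^ 2)‖ ≤ 8 * (1 / (g : ℝ) ^ 2) := by
    filter_upwards [eventually_gt_atTop 0] with R hR g
    have moebius_le : |(μ g : ℝ)| ≤ 1 := by exact_mod_cast ArithmeticFunction.abs_moebius_le_one
    rw [norm_mul, Real.norm_eq_abs, Real.norm_of_nonneg (by positivity)]
    calc |(μ g : ℝ)| * (#(puncturedBox (R / g)) / R ^ 2) ≤ 1 * (8 * (R / g) ^ 2 / R ^ 2) := by
          gcongr
          exact card_puncturedBox_le _
      _ = 8 * (1 / (g : ℝ) ^ 2) := by field_simp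
  have limit := (tendsto_tsum_of_dominated_convergence summable_bound
    (fun g => (tendsto_card_puncturedBox_div_natCast g).const_mul (μ g : ℝ))
    termwise_le).div_const 4
  have limit_eq : (∑' g : ℕ, (μ g : ℝ) * (4 / (g : ℝ) ^ 2)) / 4 = 6 / Real.pi ^ 2 := by
    rw [← tsum_moebius_div_sq, ← tsum_div_const]
    exact tsum_congr fun g => by ring
  rw [limit_eq] at limit
  refine limit.congr fun R => ?_
  simp only [← mul_div_assoc]
  rw [tsum_div_const, (hasSum_moebius_mul_card_puncturedBox R).tsum_eq, div_div, mul_comm,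
    primitiveDensity]

lemma card_primitivePoints_le (R : ℝ) : (#(primitivePoints R) : ℝ) ≤ 8 * R ^ 2 :=
  (Nat.cast_le.mpr (card_filter_le _ _)).trans (card_puncturedBox_le R)

lemma abs_primitiveDensity_le_two (R : ℝ) : |primitiveDensity R| ≤ 2 := by
  rw [primitiveDensity, abs_of_nonneg (by positivity)]
  exact div_le_of_le_mul₀ (by positivity) zero_le_two (by linarith [card_primitivePoints_le R])

lemma card_primitivePoints (R : ℝ) :
    (#(primitivePoints R) : ℝ) = 4 * R ^ 2 * primitiveDensity R := by
  rcases eq_or_ne R 0 with rfl | hR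
  · simp [primitivePoints, puncturedBox_eq_empty]
  · rw [primitiveDensity]
    field_simp

end Moebius

section Divisors

lemma exists_add_one_pow_le_mul_two_pow (k : ℕ) : ∃ B : ℕ, ∀ e, (e + 1) ^ k ≤ B * 2 ^ e := by
  have tendsto_zero := (tendsto_add_atTop_iff_nat 1).mpr
    (tendsto_pow_const_div_const_pow_of_one_lt k (one_lt_two (α := ℝ)))
  obtain ⟨C, hC⟩ := tendsto_zero.bddAbove_range
  refine ⟨⌈2 * C⌉₊, fun e => ?_⟩
  have div_le : ((e + 1 : ℕ) : ℝ) ^ k / 2 ^ (e + 1) ≤ C := hC (Set.mem_range_self e)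
  rw [div_le_iff₀ (by positivity)] at div_le
  have : (((e + 1) ^ k : ℕ) : ℝ) ≤ (⌈2 * C⌉₊ * 2 ^ e : ℕ) := by
    push_cast at div_le ⊢
    calc ((e : ℝ) + 1) ^ k ≤ C * 2 ^ (e + 1) := div_le
      _ = 2 * C * 2 ^ e := by ring
      _ ≤ ⌈2 * C⌉₊ * 2 ^ e := by gcongr; exact Nat.le_ceil _
  exact_mod_cast this

-- Primes `p ≥ 2 ^ k` satisfy `(e + 1) ^ k ≤ p ^ e`, so only those below `2 ^ k` contribute to `C`.
lemma exists_card_divisors_pow_le (k : ℕ) : ∃ C : ℕ, ∀ n ≠ 0, #n.divisors ^ k ≤ C * n := by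
  obtain ⟨B, hB⟩ := exists_add_one_pow_le_mul_two_pow k
  have one_le_B : 1 ≤ B := by simpa using hB 0
  refine ⟨B ^ 2 ^ k, fun n hn => ?_⟩
  have prime_power_le : ∀ p ∈ n.primeFactors,
      (n.factorization p + 1) ^ k ≤ (if p < 2 ^ k then B else 1) * p ^ n.factorization p := by
    intro p hp
    split_ifs with hpk
    · exact (hB _).trans (by gcongr; exact (Nat.prime_of_mem_primeFactors hp).two_le)
    · calc (n.factorization p + 1) ^ k ≤ (2 ^ n.factorization p) ^ k := by
            gcongr
            exact Nat.lt_two_pow_self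
        _ = (2 ^ k) ^ n.factorization p := pow_right_comm ..
        _ ≤ 1 * p ^ n.factorization p := by rw [one_mul]; gcongr; exact not_lt.mp hpk
  have small_primes : #{p ∈ n.primeFactors | p < 2 ^ k} ≤ 2 ^ k := by
    simpa using card_le_card (t := range (2 ^ k)) fun p hp => by simp_all
  calc #n.divisors ^ k = ∏ p ∈ n.primeFactors, (n.factorization p + 1) ^ k := by
        rw [Nat.card_divisors hn, prod_pow]
    _ ≤ ∏ p ∈ n.primeFactors, (if p < 2 ^ k then B else 1) * p ^ n.factorization p :=
        prod_le_prod' prime_power_le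
    _ = B ^ #{p ∈ n.primeFactors | p < 2 ^ k} * n := by
        rw [prod_mul_distrib, ← prod_filter, prod_const]
        congr 1
        exact Nat.prod_factorization_pow_eq_self hn
    _ ≤ B ^ 2 ^ k * n := by gcongr

lemma isLittleO_card_divisors_rpow {s : ℝ} (hs : 0 < s) :
    (fun n : ℕ => (#n.divisors : ℝ)) =o[atTop] fun n : ℕ => (n : ℝ) ^ s := by
  obtain ⟨k, hk⟩ := exists_nat_gt s⁻¹
  have one_lt_mul : 1 < s * k := (inv_lt_iff_one_lt_mul₀' hs).mp hk
  have k_ne_zero : k ≠ 0 := by rintro rfl; norm_num at one_lt_mul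
  obtain ⟨C, hC⟩ := exists_card_divisors_pow_le k
  refine Asymptotics.IsLittleO.of_pow (n := k) ?_ k_ne_zero
  have pow_isBigO : (fun n : ℕ => (#n.divisors : ℝ) ^ k) =O[atTop] fun n : ℕ => (n : ℝ) := by
    refine Asymptotics.IsBigO.of_bound C ?_
    filter_upwards [eventually_ne_atTop 0] with n hn
    simpa using (by exact_mod_cast hC n hn : (#n.divisors : ℝ) ^ k ≤ C * n)
  have linear_isLittleO : (fun x : ℝ => x) =o[atTop] fun x : ℝ => (x ^ s) ^ k := by
    refine (Asymptotics.isLittleO_iff_tendsto' ?_).mpr <|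
      (tendsto_rpow_neg_atTop (sub_pos.mpr one_lt_mul)).congr' ?_
    · filter_upwards [eventually_gt_atTop 0] with x hx h
      exact absurd h (by positivity)
    · filter_upwards [eventually_gt_atTop 0] with x hx
      rw [neg_sub, Real.rpow_sub hx, Real.rpow_one, Real.rpow_mul_natCast hx.le]
  exact pow_isBigO.trans_isLittleO (linear_isLittleO.comp_tendsto tendsto_natCast_atTop_atTop)

end Divisors

section WeightedAverage

variable {g : ℝ → ℝ} {L C : ℝ}

lemma abs_sum_mul_comp_div_sub_le {S : Finset ℕ} {w : ℕ → ℝ} {ρ R₀ ε : ℝ}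
    (hC : ∀ R, |g R| ≤ C) (hε : ∀ R, R₀ ≤ R → |g R - L| ≤ ε) (hR₀ : 0 ≤ R₀) (hρ : 0 < ρ)
    (w_nonneg : ∀ d ∈ S, 0 ≤ w d) (w_le : ∀ d ∈ S, w d ≤ (d : ℝ)⁻¹) (w_sum : ∑ d ∈ S, w d = 1) :
    |∑ d ∈ S, w d * g (ρ / d) - L| ≤ ε + (C + |L|) * R₀ * (#S / ρ) := by
  have bound_nonneg : 0 ≤ C + |L| := add_nonneg ((abs_nonneg _).trans (hC 0)) (abs_nonneg L)
  have ε_nonneg : 0 ≤ ε := (abs_nonneg _).trans (hε R₀ le_rfl)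
  have term_le : ∀ d ∈ S, |w d * (g (ρ / d) - L)| ≤ w d * ε + (C + |L|) * R₀ / ρ := by
    intro d hd
    rw [abs_mul, abs_of_nonneg (w_nonneg d hd)]
    rcases le_or_gt R₀ (ρ / d) with large | small
    · have := mul_le_mul_of_nonneg_left (hε _ large) (w_nonneg d hd)
      have : 0 ≤ (C + |L|) * R₀ / ρ := by positivity
      linarith
    · have w_le_div : w d ≤ R₀ / ρ := (w_le d hd).trans <| by
        rw [le_div_iff₀ hρ, inv_mul_eq_div]
        exact small.le
      calc w d * |g (ρ / d) - L| ≤ R₀ / ρ * (C + |L|) :=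
            mul_le_mul w_le_div ((abs_sub _ _).trans (by gcongr; exact hC _)) (abs_nonneg _)
              (by positivity)
        _ = (C + |L|) * R₀ / ρ := by ring
        _ ≤ w d * ε + (C + |L|) * R₀ / ρ :=
            le_add_of_nonneg_left (mul_nonneg (w_nonneg d hd) ε_nonneg)
  calc |∑ d ∈ S, w d * g (ρ / d) - L| = |∑ d ∈ S, w d * (g (ρ / d) - L)| := by
        simp only [mul_sub, sum_sub_distrib, ← sum_mul, w_sum, one_mul]
    _ ≤ ∑ d ∈ S, (w d * ε + (C + |L|) * R₀ / ρ) :=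
        (abs_sum_le_sum_abs _ _).trans (sum_le_sum term_le)
    _ = ε + (C + |L|) * R₀ * (#S / ρ) := by
        rw [sum_add_distrib, ← sum_mul, w_sum, sum_const, nsmul_eq_mul]
        ring

lemma tendsto_sum_mul_comp_div {ι : Type*} {l : Filter ι} {S : ι → Finset ℕ} {w : ι → ℕ → ℝ}
    {ρ : ι → ℝ} (hg : Tendsto g atTop (𝓝 L)) (hC : ∀ R, |g R| ≤ C) (hρ : ∀ᶠ i in l, 0 < ρ i)
    (w_nonneg : ∀ᶠ i in l, ∀ d ∈ S i, 0 ≤ w i d) (w_le : ∀ᶠ i in l, ∀ d ∈ S i, w i d ≤ (d : ℝ)⁻¹)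
    (w_sum : ∀ᶠ i in l, ∑ d ∈ S i, w i d = 1)
    (card_div : Tendsto (fun i => #(S i) / ρ i) l (𝓝 0)) :
    Tendsto (fun i => ∑ d ∈ S i, w i d * g (ρ i / d)) l (𝓝 L) := by
  rw [Metric.tendsto_nhds]
  intro ε hε
  obtain ⟨R₁, hR₁⟩ := Metric.tendsto_atTop.mp hg (ε / 2) (half_pos hε)
  set R₀ := max R₁ 0
  have near (R : ℝ) (hR : R₀ ≤ R) : |g R - L| ≤ ε / 2 := (hR₁ R ((le_max_left _ _).trans hR)).le
  have error_small : ∀ᶠ i in l, (C + |L|) * R₀ * (#(S i) / ρ i) < ε / 2 :=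
    (card_div.const_mul ((C + |L|) * R₀)).eventually_lt_const (by simpa using hε)
  filter_upwards [hρ, w_nonneg, w_le, w_sum, error_small] with i hρi h_nonneg h_le h_sum h_small
  have := abs_sum_mul_comp_div_sub_le hC near (le_max_right _ _) hρi h_nonneg h_le h_sum
  rw [Real.dist_eq]
  linarith

end WeightedAverage

section LinearForms

variable {A : Type*} [CommRing A]

/-- The linear form `(x, y) ↦ r₁ x + r₂ y` on `ℤ²` with coefficients `r = (r₁, r₂)` in `A`. -/
def linearForm (r : A × A) : ℤ × ℤ →+ A :=
  ((AddMonoidHom.mulLeft r.1).comp (Int.castAddHom A)).coprod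
    ((AddMonoidHom.mulLeft r.2).comp (Int.castAddHom A))

@[simp]
lemma linearForm_apply (r : A × A) (v : ℤ × ℤ) : linearForm r v = r.1 * v.1 + r.2 * v.2 := rfl

/-- The linear form with coefficients `r` vanishes at a nonzero integer point of `(-ρ, ρ)²`. For
`A = ZMod N` and `ρ ≤ N`, being nonzero is the same as being nonzero modulo `N`. -/
def HasShortSolution (ρ : ℝ) (r : A × A) : Prop :=
  ∃ v : ℤ × ℤ, v ≠ 0 ∧ linearForm r v = 0 ∧ ‖v‖ < ρ

/-- The primitive points whose smallest multiple killed by the linear form with coefficients `r`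
lies in `(-ρ, ρ)²`. -/
noncomputable def shortDirections (ρ : ℝ) (r : A × A) : Finset (ℤ × ℤ) :=
  {v ∈ primitivePoints ρ | addOrderOf (linearForm r v) * ‖v‖ < ρ}

variable (A) in
open Classical in
/-- The pairs of elements of `A` that generate the unit ideal. For `A = ZMod N` these are the
classes of the pairs `(r₁, r₂)` with `gcd(r₁, r₂, N) = 1`. -/
noncomputable def unimodularPairs [Fintype A] : Finset (A × A) :=
  {r | IsCoprime r.1 r.2}

variable {r : A × A} {ρ : ℝ} {v w : ℤ × ℤ}

lemma mem_unimodularPairs [Fintype A] : r ∈ unimodularPairs A ↔ IsCoprime r.1 r.2 := by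
  simp [unimodularPairs]

lemma linearForm_addOrderOf_smul : linearForm r (addOrderOf (linearForm r v) • v) = 0 := by
  rw [map_nsmul, addOrderOf_nsmul_eq_zero]

lemma norm_nsmul_int_prod (n : ℕ) (v : ℤ × ℤ) : ‖n • v‖ = n * ‖v‖ := by
  rw [← natCast_zsmul, norm_smul, Int.norm_natCast]

lemma exists_primitive_nsmul_eq (hv : v ≠ 0) :
    ∃ (n : ℕ) (w : ℤ × ℤ), n ≠ 0 ∧ Int.gcd w.1 w.2 = 1 ∧ n • w = v := by
  have gcd_pos : 0 < Int.gcd v.1 v.2 :=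
    Nat.pos_of_ne_zero fun h => hv (Prod.ext_iff.mpr (Int.gcd_eq_zero_iff.mp h))
  obtain ⟨n, x, y, n_pos, hxy, hx, hy⟩ := Int.exists_gcd_one' gcd_pos
  exact ⟨n, (x, y), n_pos.ne', hxy, Prod.ext (by simp [hx, mul_comm]) (by simp [hy, mul_comm])⟩

section Finite

variable [Finite A]

lemma mem_shortDirections : v ∈ shortDirections ρ r ↔
    addOrderOf (linearForm r v) * ‖v‖ < ρ ∧ Int.gcd v.1 v.2 = 1 := by
  have one_le_order : (1 : ℝ) ≤ addOrderOf (linearForm r v) := by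
    exact_mod_cast addOrderOf_pos (linearForm r v)
  rw [shortDirections, mem_filter, mem_primitivePoints]
  exact ⟨fun h => ⟨h.2, h.1.2⟩, fun h =>
    ⟨⟨(le_mul_of_one_le_left (norm_nonneg v) one_le_order).trans_lt h.1, h.2⟩, h.1⟩⟩

lemma hasShortSolution_iff_shortDirections_nonempty :
    HasShortSolution ρ r ↔ (shortDirections ρ r).Nonempty := by
  constructor
  · rintro ⟨v, hv, form_zero, norm_lt⟩
    obtain ⟨n, w, n_ne, w_prim, rfl⟩ := exists_primitive_nsmul_eq hv
    have order_le : addOrderOf (linearForm r w) ≤ n :=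
      Nat.le_of_dvd (Nat.pos_of_ne_zero n_ne)
        (addOrderOf_dvd_of_nsmul_eq_zero (by rw [← map_nsmul, form_zero]))
    refine ⟨w, mem_shortDirections.mpr ⟨lt_of_le_of_lt ?_ norm_lt, w_prim⟩⟩
    rw [norm_nsmul_int_prod]
    gcongr
  · rintro ⟨v, hv⟩
    obtain ⟨norm_lt, v_prim⟩ := mem_shortDirections.mp hv
    refine ⟨addOrderOf (linearForm r v) • v, ?_, linearForm_addOrderOf_smul, ?_⟩
    · exact smul_ne_zero (addOrderOf_pos _).ne' (ne_zero_of_gcd_eq_one v_prim)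
    · rwa [norm_nsmul_int_prod]

end Finite

lemma intCast_det_eq_zero (hr : IsCoprime r.1 r.2) (hv : linearForm r v = 0)
    (hw : linearForm r w = 0) : ((v.1 * w.2 - v.2 * w.1 : ℤ) : A) = 0 := by
  obtain ⟨α, β, hαβ⟩ := hr
  rw [linearForm_apply] at hv hw
  push_cast
  linear_combination (-((v.1 : A) * w.2 - v.2 * w.1)) * hαβ + (α * w.2 - β * w.1) * hv +
    (-α * v.2 + β * v.1) * hw

lemma abs_det_lt (hv : ‖v‖ < ρ) (hw : ‖w‖ < ρ) :
    ((|v.1 * w.2 - v.2 * w.1| : ℤ) : ℝ) < 2 * ρ ^ 2 := by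
  rw [Prod.norm_def, sup_lt_iff, Int.norm_eq_abs, Int.norm_eq_abs] at hv hw
  push_cast
  calc |(v.1 : ℝ) * w.2 - v.2 * w.1| ≤ |(v.1 : ℝ)| * |(w.2 : ℝ)| + |(v.2 : ℝ)| * |(w.1 : ℝ)| := by
        rw [← abs_mul, ← abs_mul]
        exact abs_sub _ _
    _ < ρ * ρ + ρ * ρ :=
        add_lt_add (mul_lt_mul'' hv.1 hw.2 (abs_nonneg _) (abs_nonneg _))
          (mul_lt_mul'' hv.2 hw.1 (abs_nonneg _) (abs_nonneg _))
    _ = 2 * ρ ^ 2 := by ring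

lemma det_eq_zero_of_short (N : ℕ) [CharP A N] (hρ : 2 * ρ ^ 2 ≤ N) (hr : IsCoprime r.1 r.2)
    (hv : linearForm r v = 0) (hw : linearForm r w = 0) (v_lt : ‖v‖ < ρ) (w_lt : ‖w‖ < ρ) :
    v.1 * w.2 - v.2 * w.1 = 0 := by
  apply Int.eq_zero_of_abs_lt_dvd
    ((CharP.intCast_eq_zero_iff A N _).mp (intCast_det_eq_zero hr hv hw))
  exact_mod_cast (abs_det_lt v_lt w_lt).trans_le hρ

lemma eq_or_eq_neg_of_det_eq_zero (hv : Int.gcd v.1 v.2 = 1) (hw : Int.gcd w.1 w.2 = 1)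
    (hdet : v.1 * w.2 - v.2 * w.1 = 0) : w = v ∨ w = -v := by
  obtain ⟨α, β, hαβ⟩ := Int.isCoprime_iff_gcd_eq_one.mpr hv
  obtain ⟨k, rfl⟩ : ∃ k : ℤ, w = k • v := by
    refine ⟨α * w.1 + β * w.2, Prod.ext ?_ ?_⟩ <;> simp only [Prod.smul_fst, Prod.smul_snd,
      smul_eq_mul]
    · linear_combination (-w.1) * hαβ - β * hdet
    · linear_combination (-w.2) * hαβ + α * hdet
  have k_unit : k.natAbs = 1 := by simpa [Int.gcd_mul_left, hv] using hw
  rcases Int.natAbs_eq_iff.mp k_unit with rfl | rfl <;> simp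

section Finite

variable [Finite A]

lemma neg_mem_shortDirections (hv : v ∈ shortDirections ρ r) : -v ∈ shortDirections ρ r := by
  rw [mem_shortDirections] at hv ⊢
  simpa only [map_neg, addOrderOf_neg, norm_neg, Prod.fst_neg, Prod.snd_neg, Int.gcd_neg,
    Int.neg_gcd] using hv

lemma eq_or_eq_neg_of_mem_shortDirections (N : ℕ) [CharP A N] (hρ : 2 * ρ ^ 2 ≤ N)
    (hr : IsCoprime r.1 r.2) (hv : v ∈ shortDirections ρ r) (hw : w ∈ shortDirections ρ r) :
    w = v ∨ w = -v := by
  rw [mem_shortDirections] at hv hw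
  refine eq_or_eq_neg_of_det_eq_zero hv.2 hw.2 ?_
  have det_multiples := det_eq_zero_of_short N hρ hr linearForm_addOrderOf_smul
    linearForm_addOrderOf_smul (by rw [norm_nsmul_int_prod]; exact hv.1)
    (by rw [norm_nsmul_int_prod]; exact hw.1)
  have order_mul_ne_zero : (addOrderOf (linearForm r v) * addOrderOf (linearForm r w) : ℤ) ≠ 0 := by
    exact_mod_cast mul_ne_zero (addOrderOf_pos _).ne' (addOrderOf_pos _).ne'
  refine (mul_eq_zero.mp ?_).resolve_left order_mul_ne_zero
  simp only [Prod.smul_fst, Prod.smul_snd] at det_multiples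
  simp only [nsmul_eq_mul] at det_multiples
  linear_combination det_multiples

lemma card_shortDirections (N : ℕ) [CharP A N] (hρ : 2 * ρ ^ 2 ≤ N) (hr : IsCoprime r.1 r.2)
    (h : HasShortSolution ρ r) : #(shortDirections ρ r) = 2 := by
  obtain ⟨v, hv⟩ := hasShortSolution_iff_shortDirections_nonempty.mp h
  have eq_pair : shortDirections ρ r = {v, -v} := by
    ext w
    rw [mem_insert, mem_singleton]
    refine ⟨eq_or_eq_neg_of_mem_shortDirections N hρ hr hv, ?_⟩
    rintro (rfl | rfl)
    exacts [hv, neg_mem_shortDirections hv]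
  rw [eq_pair, card_pair]
  exact fun h => ne_zero_of_gcd_eq_one (mem_shortDirections.mp hv).2 (self_eq_neg.mp h)

lemma card_filter_addOrderOf_shortDirections {d : ℕ} (hd : 0 < d) :
    #{v ∈ shortDirections ρ r | addOrderOf (linearForm r v) = d} =
      #{v ∈ primitivePoints (ρ / d) | addOrderOf (linearForm r v) = d} := by
  congr 1
  ext v
  rw [mem_filter, mem_filter, mem_shortDirections, mem_primitivePoints,
    lt_div_iff₀ (by exact_mod_cast hd), mul_comm]
  exact and_congr_left fun h => by rw [h]

end Finite

-- Completing `v` to an element of `SL₂(ℤ)` makes the form a coordinate function.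
lemma exists_equiv_fst_eq_linearForm (hv : Int.gcd v.1 v.2 = 1) :
    ∃ e : A × A ≃ A × A, ∀ r, (e r).1 = linearForm r v ∧
      (IsCoprime (e r).1 (e r).2 ↔ IsCoprime r.1 r.2) := by
  obtain ⟨α, β, hαβ⟩ := Int.isCoprime_iff_gcd_eq_one.mpr hv
  have hA : (α : A) * v.1 + β * v.2 = 1 := by exact_mod_cast congrArg (Int.cast (R := A)) hαβ
  refine ⟨⟨fun r => (r.1 * v.1 + r.2 * v.2, -β * r.1 + α * r.2),
    fun s => (α * s.1 - v.2 * s.2, β * s.1 + v.1 * s.2), fun r => Prod.ext ?_ ?_,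
    fun s => Prod.ext ?_ ?_⟩, fun r => ⟨rfl, ?_, ?_⟩⟩
  · linear_combination r.1 * hA
  · linear_combination r.2 * hA
  · linear_combination s.1 * hA
  · linear_combination s.2 * hA
  · rintro ⟨x, y, hxy⟩
    rw [Equiv.coe_fn_mk] at hxy
    exact ⟨x * v.1 - y * β, x * v.2 + y * α, by linear_combination hxy⟩
  · rintro ⟨x, y, hxy⟩
    refine ⟨x * α + y * β, y * v.1 - x * v.2, ?_⟩
    rw [Equiv.coe_fn_mk]
    linear_combination (x * r.1 + y * r.2) * hA + hxy

lemma addOrderOf_mem_divisors [Finite A] (N : ℕ) [CharP A N] (x : A) :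
    addOrderOf x ∈ N.divisors :=
  Nat.mem_divisors.mpr ⟨addOrderOf_dvd_of_nsmul_eq_zero (by simp [nsmul_eq_mul]),
    CharP.char_ne_zero_of_finite A N⟩

section Fintype

variable [Fintype A]

lemma card_filter_addOrderOf_linearForm (hv : Int.gcd v.1 v.2 = 1) (d : ℕ) :
    #{r ∈ unimodularPairs A | addOrderOf (linearForm r v) = d} =
      #{r ∈ unimodularPairs A | addOrderOf r.1 = d} := by
  obtain ⟨e, he⟩ := exists_equiv_fst_eq_linearForm (A := A) hv
  refine card_equiv e fun r => ?_
  rw [mem_filter, mem_filter, mem_unimodularPairs, mem_unimodularPairs, (he r).2, (he r).1]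

variable (N : ℕ) [CharP A N]

variable (A) in
lemma card_unimodularPairs_eq_sum :
    #(unimodularPairs A) = ∑ d ∈ N.divisors, #{r ∈ unimodularPairs A | addOrderOf r.1 = d} :=
  card_eq_sum_card_fiberwise fun r _ => addOrderOf_mem_divisors N r.1

open Classical in
lemma two_mul_card_hasShortSolution (hρ : 2 * ρ ^ 2 ≤ N) :
    2 * #{r ∈ unimodularPairs A | HasShortSolution ρ r} =
      ∑ d ∈ N.divisors, #(primitivePoints (ρ / d)) *
        #{r ∈ unimodularPairs A | addOrderOf r.1 = d} := by
  have card_directions (r) (hr : r ∈ unimodularPairs A) :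
      2 * (if HasShortSolution ρ r then 1 else 0) = #(shortDirections ρ r) := by
    split_ifs with h
    · rw [card_shortDirections N hρ (mem_unimodularPairs.mp hr) h]
    · rw [hasShortSolution_iff_shortDirections_nonempty, not_nonempty_iff_eq_empty] at h
      simp [h]
  have sum_by_order (r : A × A) : #(shortDirections ρ r) =
      ∑ d ∈ N.divisors, #{v ∈ primitivePoints (ρ / d) | addOrderOf (linearForm r v) = d} := by
    rw [card_eq_sum_card_fiberwise fun v _ => addOrderOf_mem_divisors N (linearForm r v)]
    exact sum_congr rfl fun d hd =>
      card_filter_addOrderOf_shortDirections (Nat.pos_of_mem_divisors hd)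
  have sum_over_pairs (d : ℕ) :
      ∑ r ∈ unimodularPairs A, #{v ∈ primitivePoints (ρ / d) | addOrderOf (linearForm r v) = d} =
        #(primitivePoints (ρ / d)) * #{r ∈ unimodularPairs A | addOrderOf r.1 = d} :=
    (sum_card_bipartiteAbove_eq_sum_card_bipartiteBelow
      fun r v => addOrderOf (linearForm r v) = d).trans <| sum_const_nat fun v hv =>
        card_filter_addOrderOf_linearForm (mem_primitivePoints.mp hv).2 d
  rw [card_filter, mul_sum, sum_congr rfl card_directions, sum_congr rfl fun r _ => sum_by_order r,
    sum_comm, sum_congr rfl fun d _ => sum_over_pairs d]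

end Fintype

end LinearForms

section CoprimePairsModN

lemma gcd_gcd_eq_one_iff_isCoprime (N a b : ℕ) :
    Nat.gcd (Nat.gcd a b) N = 1 ↔ IsCoprime (a : ZMod N) (b : ZMod N) := by
  rw [← Nat.coprime_iff_gcd_eq_one, ← ZMod.isUnit_iff_coprime]
  constructor
  · intro gcd_unit
    obtain ⟨u, hu⟩ := gcd_unit.exists_right_inv
    have bezout : ((Nat.gcd a b : ℕ) : ZMod N) = a * Nat.gcdA a b + b * Nat.gcdB a b := by
      exact_mod_cast congrArg (Int.cast (R := ZMod N)) (Nat.gcd_eq_gcd_ab a b)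
    exact ⟨u * Nat.gcdA a b, u * Nat.gcdB a b, by linear_combination hu - u * bezout⟩
  · intro hab
    exact hab.isUnit_of_dvd' (Nat.cast_dvd_cast (Nat.gcd_dvd_left a b))
      (Nat.cast_dvd_cast (Nat.gcd_dvd_right a b))

variable {N d : ℕ}

section Residues

variable [NeZero N] (P : ZMod N × ZMod N → Prop) [DecidablePred P]

lemma card_filter_range_product_natCast :
    #{p ∈ range N ×ˢ range N | P (p.1, p.2)} = #{r : ZMod N × ZMod N | P r} := by
  refine card_nbij' (fun p => (p.1, p.2)) (fun r => (r.1.val, r.2.val)) ?_ ?_ ?_ ?_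
  · intro p hp
    simpa using (mem_filter.mp hp).2
  · intro r hr
    simpa [ZMod.val_lt] using hr
  · intro p hp
    simp only [coe_filter, mem_product, mem_range, Set.mem_ofPred_eq] at hp
    simp [ZMod.val_cast_of_lt hp.1.1, ZMod.val_cast_of_lt hp.1.2]
  · intro r _
    simp

lemma ncard_setOf_natCast :
    {p : ℕ × ℕ | p.1 < N ∧ p.2 < N ∧ P (p.1, p.2)}.ncard = #{r : ZMod N × ZMod N | P r} := by
  rw [← card_filter_range_product_natCast, ← Set.ncard_coe_finset]
  congr 1
  ext p
  simp [and_assoc]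

end Residues

lemma card_filter_coprime_range_mul (d m : ℕ) : #{t ∈ range (d * m) | m.Coprime t} = d * φ m := by
  simp_rw [← Nat.count_eq_card_filter_range]
  induction d with
  | zero => simp
  | succ k ih =>
    have period : (fun t => m.Coprime (k * m + t)) = m.Coprime := by
      ext t
      simp
    rw [add_one_mul, Nat.count_add, ih]
    simp only [period]
    rw [Nat.count_eq_card_filter_range, ← Nat.totient_eq_card_coprime, add_one_mul]

/-- The number of coprime pairs modulo `N` whose first entry has additive order `d`, a divisor
of `N`. -/
def firstOrderCount (N d : ℕ) : ℕ := d * (φ d * φ (N / d))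

lemma isCoprime_and_addOrderOf_natCast_eq_iff [NeZero N] (hd : d ∣ N) (s t : ℕ) :
    IsCoprime (s : ZMod N) (t : ZMod N) ∧ addOrderOf (s : ZMod N) = d ↔
      N.gcd s = N / d ∧ (N / d).Coprime t := by
  have order_eq_iff : N / N.gcd s = d ↔ N.gcd s = N / d :=
    ⟨fun h => by rw [← h, Nat.div_div_self (N.gcd_dvd_left s) (NeZero.ne N)],
      fun h => by rw [h, Nat.div_div_self hd (NeZero.ne N)]⟩
  rw [← gcd_gcd_eq_one_iff_isCoprime, ZMod.addOrderOf_coe _ (NeZero.ne N), order_eq_iff,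
    Nat.gcd_comm, ← Nat.gcd_assoc, and_comm]
  exact and_congr_right fun h => by rw [h]

lemma card_filter_addOrderOf_fst [NeZero N] (hd : d ∣ N) :
    #{r ∈ unimodularPairs (ZMod N) | addOrderOf r.1 = d} = firstOrderCount N d := by
  classical
  calc #{r ∈ unimodularPairs (ZMod N) | addOrderOf r.1 = d}
      = #{p ∈ range N ×ˢ range N |
          IsCoprime (p.1 : ZMod N) (p.2 : ZMod N) ∧ addOrderOf (p.1 : ZMod N) = d} := by
        rw [unimodularPairs, filter_filter, card_filter_range_product_natCast
          fun r => IsCoprime r.1 r.2 ∧ addOrderOf r.1 = d]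
    _ = #{s ∈ range N | N.gcd s = N / d} * #{t ∈ range N | (N / d).Coprime t} := by
        simp only [isCoprime_and_addOrderOf_natCast_eq_iff hd]
        rw [← card_product, ← filter_product]
    _ = φ d * (d * φ (N / d)) := by
        congr 1
        · rw [← Nat.totient_div_of_dvd (Nat.div_dvd_of_dvd hd), Nat.div_div_self hd (NeZero.ne N)]
        · rw [← card_filter_coprime_range_mul, Nat.mul_div_cancel' hd]
    _ = firstOrderCount N d := mul_left_comm _ _ _

lemma card_unimodularPairs_zmod [NeZero N] :
    #(unimodularPairs (ZMod N)) = ∑ d ∈ N.divisors, firstOrderCount N d :=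
  (card_unimodularPairs_eq_sum (ZMod N) N).trans <| sum_congr rfl fun _ hd =>
    card_filter_addOrderOf_fst (Nat.dvd_of_mem_divisors hd)

lemma mul_firstOrderCount_eq [NeZero N] (hd : d ∣ N) :
    N * firstOrderCount N d = d ^ 2 * firstOrderCount N (N / d) := by
  rw [firstOrderCount, firstOrderCount, Nat.div_div_self hd (NeZero.ne N)]
  nth_rw 1 [← Nat.mul_div_cancel' hd]
  ring

lemma mul_firstOrderCount_div_le_sum [NeZero N] (hd : d ∣ N) :
    d * firstOrderCount N (N / d) ≤ ∑ e ∈ N.divisors, firstOrderCount N e :=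
  calc d * firstOrderCount N (N / d) = N * (φ d * φ (N / d)) := by
        rw [firstOrderCount, Nat.div_div_self hd (NeZero.ne N), ← mul_assoc,
          Nat.mul_div_cancel' hd, mul_comm (φ d)]
    _ ≤ N * φ N := by
        gcongr
        exact (Nat.totient_super_multiplicative _ _).trans_eq (by rw [Nat.mul_div_cancel' hd])
    _ = firstOrderCount N N := by
        rw [firstOrderCount, Nat.div_self (NeZero.pos N), Nat.totient_one, mul_one]
    _ ≤ ∑ e ∈ N.divisors, firstOrderCount N e :=
        single_le_sum (fun _ _ => Nat.zero_le _) (Nat.mem_divisors_self N (NeZero.ne N))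

lemma sum_firstOrderCount_pos [NeZero N] : 0 < ∑ d ∈ N.divisors, firstOrderCount N d := by
  refine sum_pos (fun d hd => ?_) (Nat.nonempty_divisors.mpr (NeZero.ne N))
  have d_pos := Nat.pos_of_mem_divisors hd
  have quot_pos := Nat.div_pos (Nat.divisor_le hd) d_pos
  exact mul_pos d_pos (mul_pos (Nat.totient_pos.mpr d_pos) (Nat.totient_pos.mpr quot_pos))

/-- The proportion of coprime pairs modulo `N` whose first entry has additive order `N / d`. -/
noncomputable def orderWeight (N d : ℕ) : ℝ :=
  firstOrderCount N (N / d) / ∑ e ∈ N.divisors, (firstOrderCount N e : ℝ)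

lemma orderWeight_nonneg (N d : ℕ) : 0 ≤ orderWeight N d :=
  div_nonneg (Nat.cast_nonneg _) (sum_nonneg fun _ _ => Nat.cast_nonneg _)

lemma sum_orderWeight [NeZero N] : ∑ d ∈ N.divisors, orderWeight N d = 1 := by
  simp only [orderWeight]
  rw [← sum_div, Nat.sum_div_divisors N fun e => (firstOrderCount N e : ℝ)]
  exact div_self (by exact_mod_cast sum_firstOrderCount_pos.ne')

lemma orderWeight_le_inv [NeZero N] (hd : d ∈ N.divisors) : orderWeight N d ≤ (d : ℝ)⁻¹ := by
  have total_pos : 0 < ∑ e ∈ N.divisors, (firstOrderCount N e : ℝ) := by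
    exact_mod_cast sum_firstOrderCount_pos
  have d_pos : (0 : ℝ) < d := by exact_mod_cast Nat.pos_of_mem_divisors hd
  rw [orderWeight, div_le_iff₀ total_pos, le_inv_mul_iff₀ d_pos]
  exact_mod_cast mul_firstOrderCount_div_le_sum (Nat.dvd_of_mem_divisors hd)

lemma tendsto_sum_orderWeight_mul_primitiveDensity {ρ : ℕ → ℝ} (hρ : ∀ᶠ N in atTop, 0 < ρ N)
    (card_div : Tendsto (fun N : ℕ => #N.divisors / ρ N) atTop (𝓝 0)) :
    Tendsto (fun N => ∑ d ∈ N.divisors, orderWeight N d * primitiveDensity (ρ N / d)) atTop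
      (𝓝 (6 / Real.pi ^ 2)) := by
  refine tendsto_sum_mul_comp_div tendsto_primitiveDensity abs_primitiveDensity_le_two hρ
    (Eventually.of_forall fun N d _ => orderWeight_nonneg N d) ?_ ?_ card_div
  · filter_upwards [eventually_ne_atTop 0] with N hN d hd
    have : NeZero N := ⟨hN⟩
    exact orderWeight_le_inv hd
  · filter_upwards [eventually_ne_atTop 0] with N hN
    have : NeZero N := ⟨hN⟩
    exact sum_orderWeight

lemma card_primitivePoints_mul_card_filter_addOrderOf_fst [NeZero N] (ρ : ℝ)
    (hd : d ∈ N.divisors) :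
    (#(primitivePoints (ρ / d)) : ℝ) * #{r ∈ unimodularPairs (ZMod N) | addOrderOf r.1 = d} =
      4 * ρ ^ 2 / N * (firstOrderCount N (N / d) * primitiveDensity (ρ / d)) := by
  have d_dvd := Nat.dvd_of_mem_divisors hd
  have d_ne : (d : ℝ) ≠ 0 := by exact_mod_cast (Nat.pos_of_mem_divisors hd).ne'
  have N_ne : (N : ℝ) ≠ 0 := NeZero.ne _
  have count_symm : (N : ℝ) * firstOrderCount N d = d ^ 2 * firstOrderCount N (N / d) := by
    exact_mod_cast mul_firstOrderCount_eq d_dvd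
  rw [card_filter_addOrderOf_fst d_dvd, card_primitivePoints]
  field_simp
  linear_combination ρ ^ 2 * primitiveDensity (ρ / d) * count_symm

open Classical in
lemma card_hasShortSolution_div_card [NeZero N] {ρ : ℝ} (hρ : 2 * ρ ^ 2 ≤ N) :
    (#{r ∈ unimodularPairs (ZMod N) | HasShortSolution ρ r} : ℝ) / #(unimodularPairs (ZMod N)) =
      2 * ρ ^ 2 / N * ∑ d ∈ N.divisors, orderWeight N d * primitiveDensity (ρ / d) := by
  have twice_count : 2 * (#{r ∈ unimodularPairs (ZMod N) | HasShortSolution ρ r} : ℝ) =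
      4 * ρ ^ 2 / N *
        ∑ d ∈ N.divisors, firstOrderCount N (N / d) * primitiveDensity (ρ / d) := by
    rw [mul_sum, ← sum_congr rfl fun d hd =>
      card_primitivePoints_mul_card_filter_addOrderOf_fst ρ hd]
    exact_mod_cast two_mul_card_hasShortSolution (A := ZMod N) N hρ
  have average_eq : ∑ d ∈ N.divisors, orderWeight N d * primitiveDensity (ρ / d) =
      (∑ d ∈ N.divisors, firstOrderCount N (N / d) * primitiveDensity (ρ / d)) /
        #(unimodularPairs (ZMod N)) := by
    simp only [orderWeight, card_unimodularPairs_zmod, Nat.cast_sum, div_mul_eq_mul_div, sum_div]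
  rw [average_eq]
  linear_combination twice_count / (2 * #(unimodularPairs (ZMod N)))

end CoprimePairsModN

section ShortSolutions

variable {N : ℕ}

lemma two_mul_sq_sqrt_div_two_le {a : ℝ} (ha : 0 ≤ a) (ha2 : a ≤ 2) :
    2 * (√(a * N) / 2) ^ 2 ≤ N := by
  rw [div_pow, Real.sq_sqrt (by positivity)]
  nlinarith [N.cast_nonneg (α := ℝ)]

lemma tendsto_card_divisors_div_sqrt {a : ℝ} (ha : 0 < a) :
    Tendsto (fun N : ℕ => #N.divisors / (√(a * N) / 2)) atTop (𝓝 0) := by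
  have div_sqrt := (isLittleO_card_divisors_rpow (s := 1 / 2) (by norm_num)).tendsto_div_nhds_zero
  simp only [← Real.sqrt_eq_rpow] at div_sqrt
  have scaled := div_sqrt.const_mul (2 / √a)
  rw [mul_zero] at scaled
  refine scaled.congr fun N => ?_
  rw [Real.sqrt_mul ha.le]
  ring

lemma intCast_zmod_eq_zero_iff {x : ℤ} (hx : |(x : ℝ)| < N) : (x : ZMod N) = 0 ↔ x = 0 := by
  refine ⟨fun h => ?_, fun h => by simp [h]⟩
  exact Int.eq_zero_of_abs_lt_dvd ((ZMod.intCast_zmod_eq_zero_iff_dvd x N).mp h)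
    (by exact_mod_cast hx)

lemma hasShortSolution_iff {ρ : ℝ} (hρ : ρ ≤ N) (r : ZMod N × ZMod N) :
    HasShortSolution ρ r ↔ ∃ x y : ℤ, ¬((x : ZMod N) = 0 ∧ (y : ZMod N) = 0) ∧
      r.1 * (x : ZMod N) + r.2 * (y : ZMod N) = 0 ∧ (|x| : ℝ) < ρ ∧ (|y| : ℝ) < ρ := by
  simp only [HasShortSolution, Prod.exists, linearForm_apply, Prod.norm_mk, sup_lt_iff,
    Int.norm_eq_abs]
  refine exists₂_congr fun x y => and_congr_left fun ⟨_, hx, hy⟩ => ?_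
  rw [intCast_zmod_eq_zero_iff (hx.trans_le hρ), intCast_zmod_eq_zero_iff (hy.trans_le hρ), ne_eq,
    Prod.mk_eq_zero]

lemma ncard_coprime_pairs [NeZero N] :
    {p : ℕ × ℕ | p.1 < N ∧ p.2 < N ∧ Nat.gcd (Nat.gcd p.1 p.2) N = 1}.ncard =
      #(unimodularPairs (ZMod N)) := by
  classical
  simp only [gcd_gcd_eq_one_iff_isCoprime]
  exact ncard_setOf_natCast fun r => IsCoprime r.1 r.2

open Classical in
lemma ncard_coprime_pairs_short [NeZero N] {ρ : ℝ} (hρ : 2 * ρ ^ 2 ≤ N) :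
    {p : ℕ × ℕ | p.1 < N ∧ p.2 < N ∧ Nat.gcd (Nat.gcd p.1 p.2) N = 1 ∧
      ∃ x y : ℤ, ¬((x : ZMod N) = 0 ∧ (y : ZMod N) = 0) ∧
        (p.1 : ZMod N) * (x : ZMod N) + (p.2 : ZMod N) * (y : ZMod N) = 0 ∧
        (|x| : ℝ) < ρ ∧ (|y| : ℝ) < ρ}.ncard =
      #{r ∈ unimodularPairs (ZMod N) | HasShortSolution ρ r} := by
  have radius_le : ρ ≤ N := by
    have one_le : (1 : ℝ) ≤ N := by exact_mod_cast NeZero.one_le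
    nlinarith
  rw [unimodularPairs, filter_filter, ← ncard_setOf_natCast]
  simp only [gcd_gcd_eq_one_iff_isCoprime, hasShortSolution_iff radius_le]

end ShortSolutions

/-- For `0 < a ≤ 2`, the proportion of pairs `(r₁,r₂) ∈ {0,…,N−1}²` with
`gcd(r₁,r₂,N) = 1` such that `r₁x + r₂y ≡ 0 (mod N)` has a non-trivial solution in the
box `B_N(a) = (−√(aN)/2, √(aN)/2)²` tends to `3a/π²` as `N → ∞`. -/
theorem prob_nontrivial_short_solution (a : ℝ) (ha : 0 < a) (ha2 : a ≤ 2) :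
    Tendsto (fun N : ℕ =>
      (Set.ncard {p : ℕ × ℕ | p.1 < N ∧ p.2 < N ∧ Nat.gcd (Nat.gcd p.1 p.2) N = 1 ∧
          ∃ x y : ℤ, ¬((x : ZMod N) = 0 ∧ (y : ZMod N) = 0) ∧
            (p.1 : ZMod N) * (x : ZMod N) + (p.2 : ZMod N) * (y : ZMod N) = 0 ∧
            (|x| : ℝ) < Real.sqrt (a * N) / 2 ∧ (|y| : ℝ) < Real.sqrt (a * N) / 2} : ℝ) /
        (Set.ncard {p : ℕ × ℕ |
          p.1 < N ∧ p.2 < N ∧ Nat.gcd (Nat.gcd p.1 p.2) N = 1} : ℝ))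
      atTop (nhds (3 * a / Real.pi ^ 2)) := by
  have radius_pos : ∀ᶠ N : ℕ in atTop, 0 < √(a * N) / 2 := by
    filter_upwards [eventually_gt_atTop 0] with N hN
    positivity
  have weighted_average := (tendsto_sum_orderWeight_mul_primitiveDensity radius_pos
    (tendsto_card_divisors_div_sqrt ha)).const_mul (a / 2)
  rw [show a / 2 * (6 / Real.pi ^ 2) = 3 * a / Real.pi ^ 2 by ring] at weighted_average
  refine weighted_average.congr' ?_
  filter_upwards [eventually_ne_atTop 0] with N hN
  have : NeZero N := ⟨hN⟩
  have radius_le := two_mul_sq_sqrt_div_two_le (N := N) ha.le ha2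
  have factor_eq : 2 * (√(a * N) / 2) ^ 2 / N = a / 2 := by
    rw [div_pow, Real.sq_sqrt (by positivity)]
    field_simp
  rw [ncard_coprime_pairs, ncard_coprime_pairs_short radius_le,
    card_hasShortSolution_div_card radius_le, factor_eq]
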